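/- Let p be a prime not dividing 2·3 (i.e., p > 3), and consider the polynomial f(x) = x⁹ − x over 𝔽_p. If p ∤ 2 and p ∤ 3 and additionally 8 ∣ p − 1 (so that 9x⁸ − 1 has 8 distinct roots), then f is a Morse polynomial in the sense that: (a) its derivative 9x⁸ − 1 has 8 distinct roots β₁, …, β₈ in an algebraic closure, and (b) the critical values f(β_i) = −(8/9)β_i are pairwise distinct. -/

import Mathlib

open Polynomial
open scoped Classical

/-!
At a critical point `β` of `f = X ^ (n + 1) - X` the relation `(n + 1) β ^ n = 1` gives
`f β = β (β ^ n - 1) = -(n / (n + 1)) β`. So, when `n ≠ 0` in the field, `f` acts on its critical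
points as multiplication by a nonzero constant, which is injective. The derivative
`(n + 1) X ^ n - 1` is, up to the unit `n + 1`, the separable polynomial `X ^ n - (n + 1)⁻¹`.
-/

theorem natCast_pow_ne_zero_of_not_dvd (R : Type*) [Semiring R] [IsReduced R] {p a : ℕ} [CharP R p]
    (ha : ¬ p ∣ a) (k : ℕ) : ((a ^ k : ℕ) : R) ≠ 0 := by
  rw [Nat.cast_pow]
  exact pow_ne_zero k (mt (CharP.cast_eq_zero_iff R p a).1 ha)

theorem natDegree_C_mul_X_pow_sub_one {R : Type*} [Ring R] {a : R} (ha : a ≠ 0) (n : ℕ) :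
    (C a * X ^ n - 1).natDegree = n := by
  rw [← C_1, natDegree_sub_C, natDegree_C_mul_X_pow n a ha]

theorem separable_C_mul_X_pow_sub_one {R : Type*} [CommRing R] {a : R} {n : ℕ}
    (ha : IsUnit a) (hn : IsUnit (n : R)) : (C a * X ^ n - 1).Separable := by
  obtain ⟨u, rfl⟩ := ha
  have factor : C (u : R) * X ^ n - 1 = C (u : R) * (X ^ n - C ((u⁻¹ : Rˣ) : R)) := by
    rw [mul_sub, ← C_mul, Units.mul_inv, C_1]
  rw [factor]
  exact (separable_X_pow_sub_C_unit u⁻¹ hn).unit_mul (isUnit_C.2 u.isUnit)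

section Field

variable {K : Type*} [Field K] {n : ℕ}

theorem card_roots_C_mul_X_pow_sub_one [IsSepClosed K] {a : K} (ha : a ≠ 0) (hn : (n : K) ≠ 0) :
    (C a * X ^ n - 1).roots.card = n := by
  have separable := separable_C_mul_X_pow_sub_one ha.isUnit hn.isUnit
  have splits := IsSepClosed.splits_of_separable _ separable
  rw [← splits.natDegree_eq_card_roots, natDegree_C_mul_X_pow_sub_one ha]

theorem card_toFinset_roots_C_mul_X_pow_sub_one [IsSepClosed K] [DecidableEq K] {a : K}
    (ha : a ≠ 0) (hn : (n : K) ≠ 0) : (C a * X ^ n - 1).roots.toFinset.card = n := by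
  have nodup := nodup_roots (separable_C_mul_X_pow_sub_one ha.isUnit hn.isUnit)
  rw [Multiset.toFinset_card_of_nodup nodup, card_roots_C_mul_X_pow_sub_one ha hn]

theorem natCast_succ_ne_zero_of_critical {β : K} (hβ : ((n + 1 : ℕ) : K) * β ^ n - 1 = 0) :
    ((n + 1 : ℕ) : K) ≠ 0 :=
  left_ne_zero_of_mul_eq_one (sub_eq_zero.1 hβ)

theorem pow_succ_sub_self_of_critical {β : K} (hβ : ((n + 1 : ℕ) : K) * β ^ n - 1 = 0) :
    β ^ (n + 1) - β = -(n / (n + 1 : ℕ)) * β := by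
  have hn1 := natCast_succ_ne_zero_of_critical hβ
  have pow_sub_one : β ^ n - 1 = -(n / (n + 1 : ℕ)) := by
    field_simp
    push_cast at hβ ⊢
    linear_combination hβ
  calc β ^ (n + 1) - β = (β ^ n - 1) * β := by ring
    _ = -(n / (n + 1 : ℕ)) * β := by rw [pow_sub_one]

theorem eq_of_critical_of_pow_succ_sub_self_eq {β γ : K} (hn : (n : K) ≠ 0)
    (hβ : ((n + 1 : ℕ) : K) * β ^ n - 1 = 0) (hγ : ((n + 1 : ℕ) : K) * γ ^ n - 1 = 0)
    (h : β ^ (n + 1) - β = γ ^ (n + 1) - γ) : β = γ := by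
  rw [pow_succ_sub_self_of_critical hβ, pow_succ_sub_self_of_critical hγ] at h
  exact mul_left_cancel₀ (neg_ne_zero.2 (div_ne_zero hn (natCast_succ_ne_zero_of_critical hβ))) h

theorem stmt_9_general [IsSepClosed K] [DecidableEq K] (hn : (n : K) ≠ 0)
    (hn1 : ((n + 1 : ℕ) : K) ≠ 0) :
    ((C ((n + 1 : ℕ) : K) * X ^ n - 1).roots.toFinset.card = n ∧
        (C ((n + 1 : ℕ) : K) * X ^ n - 1).roots.card = n) ∧
      (∀ β γ : K, ((n + 1 : ℕ) : K) * β ^ n - 1 = 0 → ((n + 1 : ℕ) : K) * γ ^ n - 1 = 0 →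
        β ^ (n + 1) - β = γ ^ (n + 1) - γ → β = γ) ∧
      (∀ β : K, ((n + 1 : ℕ) : K) * β ^ n - 1 = 0 → β ^ (n + 1) - β = -(n / (n + 1 : ℕ)) * β) :=
  ⟨⟨card_toFinset_roots_C_mul_X_pow_sub_one hn1 hn, card_roots_C_mul_X_pow_sub_one hn1 hn⟩,
    fun _ _ ↦ eq_of_critical_of_pow_succ_sub_self_eq hn, fun _ ↦ pow_succ_sub_self_of_critical⟩

end Field

/-- For a prime `p` not dividing `2` or `3` with `8 ∣ p - 1`, the polynomial
`f(x) = x⁹ - x` over `𝔽_p` is Morse: (a) its derivative `9x⁸ - 1` has `8` distinct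
roots in an algebraic closure, and (b) the critical values `f(β) = -(8/9)β` at the
critical points are pairwise distinct. -/
theorem stmt_9 (p : ℕ) [hp : Fact p.Prime] (h2 : ¬ (p ∣ 2)) (h3 : ¬ (p ∣ 3))
    (h8 : 8 ∣ p - 1) :
    ((C (9 : AlgebraicClosure (ZMod p)) * X ^ 8 - 1).roots.toFinset.card = 8 ∧
        (C (9 : AlgebraicClosure (ZMod p)) * X ^ 8 - 1).roots.card = 8) ∧
      (∀ β γ : AlgebraicClosure (ZMod p),
        9 * β ^ 8 - 1 = 0 → 9 * γ ^ 8 - 1 = 0 →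
          β ^ 9 - β = γ ^ 9 - γ → β = γ) ∧
      (∀ β : AlgebraicClosure (ZMod p), 9 * β ^ 8 - 1 = 0 →
          β ^ 9 - β = -(8 / 9) * β) := by
  simpa only [Nat.reduceAdd, Nat.cast_ofNat] using
    stmt_9_general (K := AlgebraicClosure (ZMod p)) (n := 8)
      (natCast_pow_ne_zero_of_not_dvd _ h2 3) (natCast_pow_ne_zero_of_not_dvd _ h3 2)
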